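/- arXiv:2505.22772 — 4 statements merged into one kernel-verified Lean document; each statement's English description precedes it below -/
import Mathlib

section
/- Let X be a finite type, p a probability mass function on X, f : X → ℝ, and k ≥ 1 an integer, and define g(ξ) = ∑_x p(x)·(E_ξ[f] − f(x))² + (1/k)·Var_ξ(f). Assume there is no x ∈ X with f(x) = E_p[f]. Let p* be a probability mass function with E_{p*}[f] = E_p[f], and let q be a probability mass function with Var_q(f) = 0 (for instance a Dirac mass at some y ∈ X) such that (E_q[f] − E_p[f])² < (1/k)·Var_{p*}(f). Then g(q) < g(p*) and E_q[f] ≠ E_p[f]. -/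
open Finset

/-- `IsPMF μ` says `μ` is a probability mass function on the finite type `X`. -/
def IsPMF {X : Type*} [Fintype X] (μ : X → ℝ) : Prop :=
  (∀ x, 0 ≤ μ x) ∧ ∑ x, μ x = 1

/-- Expectation of `f` under the probability mass function `μ`. -/
noncomputable def pmfExp {X : Type*} [Fintype X] (μ f : X → ℝ) : ℝ :=
  ∑ x, μ x * f x

/-- Variance of `f` under the probability mass function `μ`. -/
noncomputable def pmfVar {X : Type*} [Fintype X] (μ f : X → ℝ) : ℝ :=
  ∑ x, μ x * (f x - pmfExp μ f) ^ 2

/-- `g(ξ) = ∑_x p(x)·(E_ξ[f] − f(x))² + (1/k)·Var_ξ(f)`. -/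
noncomputable def gLoss {X : Type*} [Fintype X] (p f : X → ℝ) (k : ℕ) (ξ : X → ℝ) : ℝ :=
  (∑ x, p x * (pmfExp ξ f - f x) ^ 2) + (1 / (k : ℝ)) * pmfVar ξ f

/-!
Since `f - E_p[f]` has mean zero under `p`, the first term of `g(ξ)` is `Var_p(f)` plus the squared
bias `(E_ξ[f] - E_p[f])²`. So `p*`, which has no bias, pays `Var_{p*}(f) / k`, while `q`, which has
no variance, pays only its squared bias. Moreover `f` is constant on the support of `q`, so
`E_q[f]` is a value of `f`, whereas `E_p[f]` is not.
-/

section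

variable {X : Type*} [Fintype X] {μ : X → ℝ}

theorem sum_mul_sub_pmfExp (hμ : ∑ x, μ x = 1) (f : X → ℝ) :
    ∑ x, μ x * (f x - pmfExp μ f) = 0 := by
  simp only [mul_sub, sum_sub_distrib, ← sum_mul, hμ, one_mul]
  exact sub_self _

theorem sum_mul_sub_sq_eq_add_pmfVar (hμ : ∑ x, μ x = 1) (f : X → ℝ) (c : ℝ) :
    ∑ x, μ x * (c - f x) ^ 2 = (c - pmfExp μ f) ^ 2 + pmfVar μ f := by
  set m := pmfExp μ f with hm
  calc ∑ x, μ x * (c - f x) ^ 2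
      = ∑ x, (μ x * (c - m) ^ 2 - 2 * (c - m) * (μ x * (f x - m)) + μ x * (f x - m) ^ 2) :=
        sum_congr rfl fun x _ => by ring
    _ = (∑ x, μ x) * (c - m) ^ 2 - 2 * (c - m) * ∑ x, μ x * (f x - m) + pmfVar μ f := by
        rw [sum_add_distrib, sum_sub_distrib, sum_mul, mul_sum, pmfVar]
    _ = (c - m) ^ 2 + pmfVar μ f := by
        rw [hμ, hm, sum_mul_sub_pmfExp hμ, one_mul, mul_zero, sub_zero]

theorem gLoss_eq_sq_add_pmfVar_add {p : X → ℝ} (hp : ∑ x, p x = 1) (f : X → ℝ) (k : ℕ)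
    (ξ : X → ℝ) :
    gLoss p f k ξ =
      (pmfExp ξ f - pmfExp p f) ^ 2 + pmfVar p f + 1 / (k : ℝ) * pmfVar ξ f := by
  rw [gLoss, sum_mul_sub_sq_eq_add_pmfVar hp]

theorem pmfVar_eq_zero_iff (hμ : ∀ x, 0 ≤ μ x) {f : X → ℝ} :
    pmfVar μ f = 0 ↔ ∀ x, μ x ≠ 0 → f x = pmfExp μ f := by
  have hterm : ∀ x ∈ univ, 0 ≤ μ x * (f x - pmfExp μ f) ^ 2 := fun x _ =>
    mul_nonneg (hμ x) (sq_nonneg _)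
  simp only [pmfVar, sum_eq_zero_iff_of_nonneg hterm, mem_univ, true_imp_iff, mul_eq_zero,
    sq_eq_zero_iff, sub_eq_zero, or_iff_not_imp_left, ne_eq]

theorem IsPMF.pmfExp_mem_range_of_pmfVar_eq_zero (hμ : IsPMF μ) {f : X → ℝ}
    (hvar : pmfVar μ f = 0) : pmfExp μ f ∈ Set.range f := by
  obtain ⟨x, -, hx⟩ := exists_ne_zero_of_sum_ne_zero (hμ.2.trans_ne one_ne_zero)
  exact ⟨x, (pmfVar_eq_zero_iff hμ.1).1 hvar x hx⟩

end

/-- If no `x` has `f(x) = E_p[f]`, `p*` is mean-matching, and `q` has zero variance with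
`(E_q[f] − E_p[f])² < (1/k)·Var_{p*}(f)`, then `g(q) < g(p*)` and `E_q[f] ≠ E_p[f]`. -/
theorem gLoss_zero_var_beats_mean_matching {X : Type*} [Fintype X]
    (p f : X → ℝ) (hp : IsPMF p) (k : ℕ) (hk : 1 ≤ k)
    (hno : ∀ x : X, f x ≠ pmfExp p f)
    (pstar q : X → ℝ) (hpstar : IsPMF pstar) (hq : IsPMF q)
    (hmean : pmfExp pstar f = pmfExp p f)
    (hqvar : pmfVar q f = 0)
    (hlt : (pmfExp q f - pmfExp p f) ^ 2 < (1 / (k : ℝ)) * pmfVar pstar f) :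
    gLoss p f k q < gLoss p f k pstar ∧ pmfExp q f ≠ pmfExp p f := by
  constructor
  · calc gLoss p f k q
        = (pmfExp q f - pmfExp p f) ^ 2 + pmfVar p f := by
          rw [gLoss_eq_sq_add_pmfVar_add hp.2, hqvar, mul_zero, add_zero]
      _ < 1 / (k : ℝ) * pmfVar pstar f + pmfVar p f := by gcongr
      _ = gLoss p f k pstar := by
          rw [gLoss_eq_sq_add_pmfVar_add hp.2, hmean]
          ring
  · obtain ⟨x, hx⟩ := hq.pmfExp_mem_range_of_pmfVar_eq_zero hqvar
    exact hx ▸ hno x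
end

section
/- Let X be a finite type, p a probability mass function on X, f : X → ℝ, and k ≥ 1 an integer, and define g(ξ) = ∑_x p(x)·(E_ξ[f] − f(x))² + (1/k)·Var_ξ(f). Assume there is no x ∈ X with f(x) = E_p[f], and assume there exists a probability mass function q with Var_q(f) = 0 and (E_q[f] − E_p[f])² < (1/k)·Var_{p'}(f) for every probability mass function p' with E_{p'}[f] = E_p[f]. Then no probability mass function ξ with E_ξ[f] = E_p[f] minimizes g over the set of all probability mass functions on X; equivalently, every minimizer ξ* of g satisfies E_{ξ*}[f] ≠ E_p[f]. -/
/-!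
By the bias–variance decomposition, `g(ξ) = (E_ξ[f] − E_p[f])² + (1/k)·Var_ξ(f) + Var_p(f)`.
A mean-matching `ξ` pays only the variance term above the constant `Var_p(f)`, while the
zero-variance `q` pays only the bias term, which is smaller by assumption; so `g(q) < g(ξ)`.
-/

open Finset

section BiasVariance

variable {X : Type*} [Fintype X] {p : X → ℝ}

theorem sum_mul_sub_pmfExp_eq_zero (hp : ∑ x, p x = 1) (f : X → ℝ) :
    ∑ x, p x * (f x - pmfExp p f) = 0 := by
  simp only [mul_sub, sum_sub_distrib, ← sum_mul, hp, one_mul]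
  exact sub_self (pmfExp p f)

theorem sum_mul_const_sub_sq_eq_sq_add_pmfVar (hp : ∑ x, p x = 1) (f : X → ℝ) (c : ℝ) :
    ∑ x, p x * (c - f x) ^ 2 = (c - pmfExp p f) ^ 2 + pmfVar p f := by
  set m := pmfExp p f with hm
  have hcross : ∑ x, p x * (f x - m) = 0 := sum_mul_sub_pmfExp_eq_zero hp f
  calc ∑ x, p x * (c - f x) ^ 2
      = ∑ x, (p x * (c - m) ^ 2 - 2 * (c - m) * (p x * (f x - m)) + p x * (f x - m) ^ 2) :=
        sum_congr rfl fun x _ => by ring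
    _ = (∑ x, p x) * (c - m) ^ 2 - 2 * (c - m) * ∑ x, p x * (f x - m)
          + ∑ x, p x * (f x - m) ^ 2 := by
        rw [sum_add_distrib, sum_sub_distrib, ← sum_mul, ← mul_sum]
    _ = (c - m) ^ 2 + pmfVar p f := by
        rw [hp, hcross, one_mul, mul_zero, sub_zero, pmfVar, hm]

theorem gLoss_eq_sq_add_pmfVar_add_pmfVar (hp : ∑ x, p x = 1) (f : X → ℝ) (k : ℕ) (ξ : X → ℝ) :
    gLoss p f k ξ =
      (pmfExp ξ f - pmfExp p f) ^ 2 + (1 / (k : ℝ)) * pmfVar ξ f + pmfVar p f := by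
  rw [gLoss, sum_mul_const_sub_sq_eq_sq_add_pmfVar hp, add_right_comm]

end BiasVariance

/-- If no `x` has `f(x) = E_p[f]`, and some zero-variance `q` satisfies
`(E_q[f] − E_p[f])² < (1/k)·Var_{p'}(f)` for every mean-matching `p'`, then every
minimizer `ξ*` of `g` over all probability mass functions satisfies `E_{ξ*}[f] ≠ E_p[f]`. -/
theorem gLoss_minimizer_not_mean_matching {X : Type*} [Fintype X]
    (p f : X → ℝ) (hp : IsPMF p) (k : ℕ) (hk : 1 ≤ k)
    (hno : ∀ x : X, f x ≠ pmfExp p f)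
    (hq : ∃ q : X → ℝ, IsPMF q ∧ pmfVar q f = 0 ∧
      ∀ p' : X → ℝ, IsPMF p' → pmfExp p' f = pmfExp p f →
        (pmfExp q f - pmfExp p f) ^ 2 < (1 / (k : ℝ)) * pmfVar p' f) :
    ∀ ξ : X → ℝ, IsPMF ξ →
      (∀ ξ' : X → ℝ, IsPMF ξ' → gLoss p f k ξ ≤ gLoss p f k ξ') →
      pmfExp ξ f ≠ pmfExp p f := by
  intro ξ hξ hmin hmean
  obtain ⟨q, hq_pmf, hq_var, hq_lt⟩ := hq
  refine (hmin q hq_pmf).not_gt ?_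
  calc gLoss p f k q
      = (pmfExp q f - pmfExp p f) ^ 2 + pmfVar p f := by
        rw [gLoss_eq_sq_add_pmfVar_add_pmfVar hp.2, hq_var, mul_zero, add_zero]
    _ < (1 / (k : ℝ)) * pmfVar ξ f + pmfVar p f :=
        add_lt_add_left (hq_lt ξ hξ hmean) _
    _ = gLoss p f k ξ := by
        rw [gLoss_eq_sq_add_pmfVar_add_pmfVar hp.2, hmean, sub_self, zero_pow two_ne_zero, zero_add]
end

section
/- There exist a finite type X, a probability mass function p on X, a function V : X → ℝ, and a family 𝒫 of probability mass functions on X with p ∈ 𝒫, such that every ξ ∈ 𝒫 minimizing the expected single-sample surrogate loss ξ ↦ ∑_x ∑_y ξ(x)·p(y)·(V(x) − V(y))² over 𝒫 satisfies E_ξ[V] ≠ E_p[V]. In other words, the sample-based one-step IterVAML surrogate loss is minimum-uncalibrated: its minimizers over a class containing the true distribution p need not reproduce the true expected value E_p[V]. -/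
open Finset

/-- Expected single-sample one-step IterVAML surrogate loss of the model distribution `ξ`
against the true distribution `p`: `E_{X∼ξ, Y∼p}[(V(X) − V(Y))²]`. -/
noncomputable def itervamlSurrogate {X : Type*} [Fintype X] (p V ξ : X → ℝ) : ℝ :=
  ∑ x, ∑ y, ξ x * p y * (V x - V y) ^ 2

/-- Body of the uncalibratedness statement: `p` is a pmf, `Fam` is a family of pmfs
containing `p`, the surrogate loss attains its minimum over `Fam`, and every minimizer
`ξ ∈ Fam` of the surrogate loss has `E_ξ[V] ≠ E_p[V]`. -/
def ItervamlUncalibratedBody (X : Type) [Fintype X] (p V : X → ℝ)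
    (Fam : Set (X → ℝ)) : Prop :=
  IsPMF p ∧ (∀ ξ ∈ Fam, IsPMF ξ) ∧ p ∈ Fam ∧
  (∃ ξ ∈ Fam, ∀ ξ' ∈ Fam, itervamlSurrogate p V ξ ≤ itervamlSurrogate p V ξ') ∧
  (∀ ξ ∈ Fam, (∀ ξ' ∈ Fam, itervamlSurrogate p V ξ ≤ itervamlSurrogate p V ξ') →
    pmfExp ξ V ≠ pmfExp p V)

/-!
The bias–variance identity `E_{Y∼p}[(a − V Y)²] = (a − E_p[V])² + Var_p[V]` turns the surrogate
loss of `ξ` into `E_ξ[(V − E_p[V])²] + Var_p[V]`. It therefore penalizes the spread of `V` under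
`ξ`, and over all probability mass functions its minimizers live on the points where `V` is closest
to `E_p[V]`. If `V` takes a single value `v` at these points and `v ≠ E_p[V]`, then every minimizer
has expected value `v`.
-/

section Expectation

variable {X : Type*} [Fintype X] {μ f : X → ℝ} {c : ℝ}

theorem pmfExp_add (μ f g : X → ℝ) :
    pmfExp μ (fun x => f x + g x) = pmfExp μ f + pmfExp μ g := by
  simp only [pmfExp, mul_add, sum_add_distrib]

theorem pmfExp_sub (μ f g : X → ℝ) :
    pmfExp μ (fun x => f x - g x) = pmfExp μ f - pmfExp μ g := by
  simp only [pmfExp, mul_sub, sum_sub_distrib]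

theorem pmfExp_const_mul (μ : X → ℝ) (c : ℝ) (f : X → ℝ) :
    pmfExp μ (fun x => c * f x) = c * pmfExp μ f := by
  simp only [pmfExp, mul_sum, mul_left_comm]

theorem pmfExp_const (hμ : ∑ x, μ x = 1) (c : ℝ) : pmfExp μ (fun _ => c) = c := by
  rw [pmfExp, ← sum_mul, hμ, one_mul]

theorem pmfExp_eq_of_forall_ne_zero (hμ : ∑ x, μ x = 1) (hf : ∀ x, μ x ≠ 0 → f x = c) :
    pmfExp μ f = c := by
  rw [← pmfExp_const hμ c]
  refine sum_congr rfl fun x _ => ?_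
  rcases eq_or_ne (μ x) 0 with hx | hx
  · simp only [hx, zero_mul]
  · rw [hf x hx]

theorem pmfExp_single [DecidableEq X] (x₀ : X) (f : X → ℝ) :
    pmfExp (Pi.single x₀ 1) f = f x₀ := by
  simp [pmfExp, Pi.single_apply]

theorem pmfExp_const_sub_sq (hμ : ∑ x, μ x = 1) (f : X → ℝ) (a : ℝ) :
    pmfExp μ (fun x => (a - f x) ^ 2) =
      (a - pmfExp μ f) ^ 2 + pmfExp μ (fun x => (f x - pmfExp μ f) ^ 2) := by
  set m := pmfExp μ f with hm
  have expand (x : X) :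
      (a - f x) ^ 2 = (a - m) ^ 2 + (f x - m) ^ 2 - 2 * (a - m) * (f x - m) := by ring
  have centered : pmfExp μ (fun x => f x - m) = 0 := by
    rw [pmfExp_sub, pmfExp_const hμ, ← hm, sub_self]
  simp only [expand, pmfExp_sub μ (fun _ => _ + _), pmfExp_add, pmfExp_const hμ,
    pmfExp_const_mul, centered, mul_zero, sub_zero]

theorem isPMF_single [DecidableEq X] (x₀ : X) : IsPMF (Pi.single x₀ 1 : X → ℝ) :=
  single_mem_stdSimplex ℝ x₀

theorem IsPMF.le_pmfExp (hμ : IsPMF μ) (hf : ∀ x, c ≤ f x) : c ≤ pmfExp μ f := by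
  rw [← pmfExp_const hμ.2 c]
  exact sum_le_sum fun x _ => mul_le_mul_of_nonneg_left (hf x) (hμ.1 x)

theorem IsPMF.eq_of_pmfExp_le (hμ : IsPMF μ) (hf : ∀ x, c ≤ f x) (hle : pmfExp μ f ≤ c)
    {x : X} (hx : μ x ≠ 0) : f x = c := by
  have excess_nonneg (y : X) : 0 ≤ μ y * (f y - c) := mul_nonneg (hμ.1 y) (sub_nonneg.2 (hf y))
  have excess_sum : ∑ y, μ y * (f y - c) = 0 := by
    change pmfExp μ (fun y => f y - c) = 0
    rw [pmfExp_sub, pmfExp_const hμ.2, le_antisymm hle (hμ.le_pmfExp hf), sub_self]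
  have excess_zero : μ x * (f x - c) = 0 :=
    (sum_eq_zero_iff_of_nonneg fun y _ => excess_nonneg y).1 excess_sum x (mem_univ x)
  exact sub_eq_zero.1 ((mul_eq_zero.1 excess_zero).resolve_left hx)

end Expectation

section Surrogate

variable {X : Type*} [Fintype X] {p ξ ξ' : X → ℝ}

theorem itervamlSurrogate_eq_pmfExp_pmfExp (p V ξ : X → ℝ) :
    itervamlSurrogate p V ξ = pmfExp ξ (fun x => pmfExp p (fun y => (V x - V y) ^ 2)) := by
  simp only [itervamlSurrogate, pmfExp, mul_sum, mul_assoc]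

theorem itervamlSurrogate_eq_add (hp : ∑ x, p x = 1) (hξ : ∑ x, ξ x = 1) (V : X → ℝ) :
    itervamlSurrogate p V ξ =
      pmfExp ξ (fun x => (V x - pmfExp p V) ^ 2) +
        pmfExp p (fun y => (V y - pmfExp p V) ^ 2) := by
  simp only [itervamlSurrogate_eq_pmfExp_pmfExp, pmfExp_const_sub_sq hp, pmfExp_add,
    pmfExp_const hξ]

theorem itervamlSurrogate_le_iff (hp : ∑ x, p x = 1) (hξ : ∑ x, ξ x = 1)
    (hξ' : ∑ x, ξ' x = 1) (V : X → ℝ) :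
    itervamlSurrogate p V ξ ≤ itervamlSurrogate p V ξ' ↔
      pmfExp ξ (fun x => (V x - pmfExp p V) ^ 2) ≤
        pmfExp ξ' (fun x => (V x - pmfExp p V) ^ 2) := by
  rw [itervamlSurrogate_eq_add hp hξ, itervamlSurrogate_eq_add hp hξ', add_le_add_iff_right]

end Surrogate

theorem itervamlUncalibratedBody_setOf_isPMF {X : Type} [Fintype X] {p V : X → ℝ}
    (hp : IsPMF p) {x₀ : X} (hne : V x₀ ≠ pmfExp p V)
    (hclosest : ∀ x, V x ≠ V x₀ → |V x₀ - pmfExp p V| < |V x - pmfExp p V|) :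
    ItervamlUncalibratedBody X p V {ξ | IsPMF ξ} := by
  classical
  have sq_dist_le (x : X) : (V x₀ - pmfExp p V) ^ 2 ≤ (V x - pmfExp p V) ^ 2 := by
    rcases eq_or_ne (V x) (V x₀) with hx | hx
    · rw [hx]
    · exact (sq_lt_sq.2 (hclosest x hx)).le
  refine ⟨hp, fun _ hξ => hξ, hp, ⟨Pi.single x₀ 1, isPMF_single x₀, fun ξ hξ => ?_⟩,
    fun ξ hξ hmin => ?_⟩
  · rw [itervamlSurrogate_le_iff hp.2 (isPMF_single x₀).2 hξ.2, pmfExp_single]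
    exact hξ.le_pmfExp sq_dist_le
  · have loss_le : pmfExp ξ (fun x => (V x - pmfExp p V) ^ 2) ≤ (V x₀ - pmfExp p V) ^ 2 := by
      simpa only [pmfExp_single] using
        (itervamlSurrogate_le_iff hp.2 hξ.2 (isPMF_single x₀).2 V).1 (hmin _ (isPMF_single x₀))
    have value_eq (x : X) (hx : ξ x ≠ 0) : V x = V x₀ := by
      by_contra hV
      exact (sq_lt_sq.2 (hclosest x hV)).ne' (hξ.eq_of_pmfExp_le sq_dist_le loss_le hx)
    rwa [pmfExp_eq_of_forall_ne_zero hξ.2 value_eq]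

/-- The sample-based one-step IterVAML surrogate loss is minimum-uncalibrated: there are
a finite type `X`, a true distribution `p`, a value function `V`, and a class `Fam ∋ p`
such that every minimizer of the surrogate loss over `Fam` fails to match `E_p[V]`. -/
theorem itervaml_surrogate_uncalibrated :
    ∃ (X : Type) (inst : Fintype X) (p V : X → ℝ) (Fam : Set (X → ℝ)),
      @ItervamlUncalibratedBody X inst p V Fam := by
  have isPMF_p : IsPMF (![1 / 4, 3 / 4] : Fin 2 → ℝ) :=
    ⟨Fin.forall_fin_two.2 (by norm_num), by norm_num [Fin.sum_univ_two]⟩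
  have mean_eq : pmfExp ![1 / 4, 3 / 4] (![0, 1] : Fin 2 → ℝ) = 3 / 4 := by
    simp [pmfExp, Fin.sum_univ_two]
  refine ⟨Fin 2, inferInstance, ![1 / 4, 3 / 4], ![0, 1], {ξ | IsPMF ξ},
    itervamlUncalibratedBody_setOf_isPMF isPMF_p (x₀ := 1) ?_ ?_⟩
  · norm_num [mean_eq]
  · rw [mean_eq, Fin.forall_fin_two]
    norm_num [abs_of_pos, abs_of_neg]
end

section
/- Let X be a compact, connected, metrizable topological space, let p be a continuous Markov kernel from X to probability measures on X (i.e., x ↦ p(·|x) is continuous for the topology of weak convergence of probability measures), let Z be a metrizable space, let φ : X → Z be a continuous bijection, and let V : Z → ℝ be continuous. Write V_X = V ∘ φ. Then there exists a Borel-measurable function f* : Z → Z such that V(f*(φ(x))) = ∫ V_X(x') dp(·|x)(x') for all x ∈ X. -/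
open MeasureTheory

/-!
By the intermediate value theorem the mean of `V ∘ φ` under each `p(·|x)` is a value of `V ∘ φ`;
the point is to choose in a Borel way where it is attained. A continuous map on a σ-compact
metrizable space has a Borel section over its range: each compact piece is a continuous image of the
Cantor set, where one can take the least point of every fibre, and countably many pieces are glued
by using the first one that meets the fibre. A section of `V ∘ φ` turns the mean into a point of the
space, and a section of `φ` is a Borel inverse of `φ`.
-/

open Function ProbabilityTheory Set TopologicalSpace

section MeasurableSection

variable {X Y : Type*} [TopologicalSpace X] [TopologicalSpace Y] [T2Space Y] [MeasurableSpace Y]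
  [BorelSpace Y] {f : X → Y}

theorem measurableSet_range_of_sigmaCompactSpace [SigmaCompactSpace X] (hf : Continuous f) :
    MeasurableSet (range f) := by
  rw [← image_univ, ← iUnion_compactCovering X, image_iUnion]
  exact .iUnion fun n => ((isCompact_compactCovering X n).image hf).measurableSet

theorem exists_measurable_rightInverse_of_isCompact {α : Type*} [LinearOrder α]
    [TopologicalSpace α] [OrderTopology α] [SecondCountableTopology α] [MeasurableSpace α]
    [BorelSpace α] {K : Set α} (hK : IsCompact K) {f : K → Y} (hf : Continuous f)
    (hsurj : Surjective f) : ∃ s : Y → K, Measurable s ∧ RightInverse s f := by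
  have : CompactSpace K := isCompact_iff_compactSpace.mp hK
  have exists_least (y : Y) : ∃ c ∈ f ⁻¹' {y}, IsMinOn ((↑) : K → α) (f ⁻¹' {y}) c :=
    (isClosed_singleton.preimage hf).isCompact.exists_isMinOn (hsurj y)
      continuous_subtype_val.continuousOn
  choose s s_mem s_least using exists_least
  suffices hs : Measurable fun y => (s y : α) from ⟨s, hs.subtype_mk, s_mem⟩
  refine measurable_of_Iic fun a => ?_
  have preimage_Iic : (fun y => (s y : α)) ⁻¹' Iic a = f '' {c | (c : α) ≤ a} := by
    ext y
    constructor
    · exact fun hy => ⟨s y, hy, s_mem y⟩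
    · rintro ⟨c, hca, rfl⟩
      exact (isMinOn_iff.mp (s_least (f c)) c rfl).trans hca
  have isClosed_le_a : IsClosed {c : K | (c : α) ≤ a} :=
    isClosed_le continuous_subtype_val continuous_const
  rw [preimage_Iic]
  exact (isClosed_le_a.isCompact.image hf).measurableSet

variable [MeasurableSpace X] [BorelSpace X] [MetrizableSpace X]

theorem exists_measurable_rightInverse_of_compactSpace [CompactSpace X] (hf : Continuous f)
    (hsurj : Surjective f) : ∃ s : Y → X, Measurable s ∧ RightInverse s f := by
  rcases isEmpty_or_nonempty X with hX | hX
  · have : IsEmpty Y := hsurj.isEmpty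
    exact ⟨isEmptyElim, measurable_of_empty _, isEmptyElim⟩
  let := metrizableSpaceMetric X
  obtain ⟨q, hq, hq_surj⟩ := exists_nat_bool_continuous_surjective_of_compact X
  let e := cantorSetHomeomorphNatToBool
  have hqe : Continuous (q ∘ e) := hq.comp e.continuous
  obtain ⟨s, hs, hs_inv⟩ := exists_measurable_rightInverse_of_isCompact isCompact_cantorSet
    (hf.comp hqe) (hsurj.comp (hq_surj.comp e.surjective))
  exact ⟨q ∘ e ∘ s, hqe.measurable.comp hs, hs_inv⟩

theorem exists_measurable_rightInvOn_image [Nonempty X] {K : Set X} (hK : IsCompact K)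
    (hf : ContinuousOn f K) :
    ∃ s : Y → X, Measurable s ∧ RightInvOn s f (f '' K) := by
  have : CompactSpace K := isCompact_iff_compactSpace.mp hK
  have hfK : MeasurableSet (f '' K) := (hK.image_of_continuousOn hf).measurableSet
  obtain ⟨s, hs, hs_inv⟩ := exists_measurable_rightInverse_of_compactSpace
    (hf.mapsToRestrict (mapsTo_image f K)) (surjective_mapsTo_image_restrict f K)
  obtain ⟨t, ht, hts⟩ := (MeasurableEmbedding.subtype_coe hfK).exists_measurable_extend
    hs.subtype_val fun _ => ‹Nonempty X›
  refine ⟨t, ht, fun y hy => ?_⟩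
  calc f (t y) = f (s ⟨y, hy⟩) := congrArg f (congrFun hts ⟨y, hy⟩)
    _ = y := congrArg Subtype.val (hs_inv ⟨y, hy⟩)

variable [SigmaCompactSpace X]

theorem exists_measurable_rightInverse (hf : Continuous f) (hsurj : Surjective f) :
    ∃ s : Y → X, Measurable s ∧ RightInverse s f := by
  classical
  rcases isEmpty_or_nonempty X with hX | hX
  · have : IsEmpty Y := hsurj.isEmpty
    exact ⟨isEmptyElim, measurable_of_empty _, isEmptyElim⟩
  let K := compactCovering X
  have hK (n : ℕ) : IsCompact (K n) := isCompact_compactCovering X n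
  choose s hs hs_inv using fun n => exists_measurable_rightInvOn_image (hK n) hf.continuousOn
  have exists_index (y : Y) : ∃ n, y ∈ f '' K n := by
    obtain ⟨x, rfl⟩ := hsurj y
    exact (exists_mem_compactCovering x).imp fun n hx => mem_image_of_mem f hx
  exact ⟨fun y => s (Nat.find (exists_index y)) y,
    Measurable.find hs (fun n => ((hK n).image hf).measurableSet) exists_index,
    fun y => hs_inv _ (Nat.find_spec (exists_index y))⟩

theorem measurableEmbedding_of_continuous_injective (hf : Continuous f) (hinj : Injective f) :
    MeasurableEmbedding f := by
  obtain ⟨s, hs, hs_inv⟩ :=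
    exists_measurable_rightInverse hf.rangeFactorization rangeFactorization_surjective
  exact .of_measurable_inverse_on_range hf.measurable
    (measurableSet_range_of_sigmaCompactSpace hf) hs
    (hs_inv.leftInverse_of_injective (rangeFactorization_injective.mpr hinj))

end MeasurableSection

theorem integral_mem_range {X : Type*} [TopologicalSpace X] [PreconnectedSpace X]
    [MeasurableSpace X] {μ : Measure X} [IsProbabilityMeasure μ] {f : X → ℝ} (hf : Continuous f)
    (hint : Integrable f μ) : ∫ x, f x ∂μ ∈ range f :=
  mem_range_of_exists_le_of_exists_ge hf (exists_le_integral hint) (exists_integral_le hint)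

theorem exists_measurable_apply_eq_integral {Ω X : Type*} [MeasurableSpace Ω]
    [TopologicalSpace X] [SigmaCompactSpace X] [PreconnectedSpace X] [MetrizableSpace X]
    [MeasurableSpace X] [BorelSpace X] (κ : Kernel Ω X) [IsMarkovKernel κ]
    {f : X → ℝ} (hf : Continuous f) (hint : ∀ ω, Integrable f (κ ω)) :
    ∃ g : Ω → X, Measurable g ∧ ∀ ω, f (g ω) = ∫ x, f x ∂κ ω := by
  obtain ⟨s, hs, hs_inv⟩ :=
    exists_measurable_rightInverse hf.rangeFactorization rangeFactorization_surjective
  have hmean : Measurable fun ω => ∫ x, f x ∂κ ω :=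
    hf.measurable.stronglyMeasurable.integral_kernel.measurable
  have hmem (ω : Ω) : ∫ x, f x ∂κ ω ∈ range f := integral_mem_range hf (hint ω)
  exact ⟨fun ω => s ⟨_, hmem ω⟩, hs.comp (hmean.subtype_mk (h := hmem)),
    fun ω => congrArg Subtype.val (hs_inv ⟨_, hmem ω⟩)⟩

theorem measurable_probabilityMeasure_of_continuous {S Ω : Type*} [TopologicalSpace S]
    [MeasurableSpace S] [OpensMeasurableSpace S] [TopologicalSpace Ω] [HasOuterApproxClosed Ω]
    [MeasurableSpace Ω] [BorelSpace Ω] {p : S → ProbabilityMeasure Ω} (hp : Continuous p) :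
    Measurable p := by
  suffices h : Measurable fun s => (p s : Measure Ω) from h.subtype_mk
  refine .measure_of_isPiSystem_of_isProbabilityMeasure
    ((BorelSpace.measurable_eq (α := Ω)).trans borel_eq_generateFrom_isClosed)
    isPiSystem_isClosed fun F hF => ?_
  have measure_usc : UpperSemicontinuous fun s => (p s : Measure Ω) F :=
    upperSemicontinuous_iff_limsup_le.mpr fun s =>
      ProbabilityMeasure.limsup_measure_closed_le_of_tendsto (hp.tendsto s) hF
  exact measure_usc.measurable

theorem exists_deterministic_value_equivalent_model_general
    {X Z : Type*}
    [TopologicalSpace X] [SigmaCompactSpace X] [PreconnectedSpace X] [MetrizableSpace X]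
    [MeasurableSpace X] [BorelSpace X]
    [TopologicalSpace Z] [T2Space Z] [MeasurableSpace Z] [BorelSpace Z]
    {p : X → ProbabilityMeasure X} (hp : Measurable p)
    {φ : X → Z} (hφc : Continuous φ) (hφi : Injective φ)
    {V : Z → ℝ} (hVφ : Continuous (V ∘ φ))
    (hint : ∀ x, Integrable (V ∘ φ) (p x : Measure X)) :
    ∃ fstar : Z → Z, Measurable fstar ∧
      ∀ x, V (fstar (φ x)) = ∫ x', V (φ x') ∂(p x : Measure X) := by
  let κ : Kernel X X := ⟨fun x => p x, hp.subtype_val⟩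
  have : IsMarkovKernel κ := ⟨fun x => (p x).2⟩
  obtain ⟨g, hg, hVg⟩ := exists_measurable_apply_eq_integral κ hVφ hint
  obtain ⟨fstar, hfstar, hfstar_comp⟩ :=
    (measurableEmbedding_of_continuous_injective hφc hφi).exists_measurable_extend
      (hφc.measurable.comp hg) fun z => ⟨z⟩
  refine ⟨fstar, hfstar, fun x => ?_⟩
  calc V (fstar (φ x)) = V (φ (g x)) := congrArg V (congrFun hfstar_comp x)
    _ = ∫ x', V (φ x') ∂(p x : Measure X) := hVg x

/-- Deterministic representation: for a compact, connected, metrizable space `X`, a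
continuous Markov kernel `p : X → ProbabilityMeasure X` (continuity for the topology of
weak convergence), a continuous bijection `φ : X → Z` into a metrizable space and a
continuous `V : Z → ℝ`, there is a Borel-measurable `f* : Z → Z` with
`V(f*(φ(x))) = ∫ V(φ(x')) dp(·|x)(x')` for all `x`. -/
theorem exists_deterministic_value_equivalent_model
    {X Z : Type*}
    [TopologicalSpace X] [CompactSpace X] [ConnectedSpace X]
    [TopologicalSpace.MetrizableSpace X]
    [MeasurableSpace X] [BorelSpace X]
    [TopologicalSpace Z] [TopologicalSpace.MetrizableSpace Z]
    [MeasurableSpace Z] [BorelSpace Z]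
    (p : X → ProbabilityMeasure X) (hp : Continuous p)
    (φ : X → Z) (hφc : Continuous φ) (hφb : Function.Bijective φ)
    (V : Z → ℝ) (hV : Continuous V) :
    ∃ fstar : Z → Z, Measurable fstar ∧
      ∀ x : X, V (fstar (φ x)) = ∫ x', V (φ x') ∂(p x : Measure X) :=
  exists_deterministic_value_equivalent_model_general
    (measurable_probabilityMeasure_of_continuous hp) hφc hφb.injective (hV.comp hφc)
    fun _ => (BoundedContinuousFunction.mkOfCompact ⟨_, hV.comp hφc⟩).integrable _
end
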